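/- Let A be any Lagrangian subspace of (⋀³V₆, ω) and set W = {w ∈ ⋀²V₅ : η + x∧w ∈ A for some η ∈ ⋀³V₅}. Then there is a unique symmetric bilinear form q on W such that A = A(W,q); namely, for all w, w′ ∈ W and any η ∈ ⋀³V₅ with η + x∧w ∈ A, the value −vol(x∧η∧w′) does not depend on the choice of η, and setting q(w,w′) = −vol(x∧η∧w′) defines a symmetric bilinear form on W with A = A(W,q). Moreover dim W = 10 − dim(A ∩ ⋀³V₅). -/

import Mathlib

open ExteriorAlgebra Module

noncomputable section

namespace EPW

variable (V : Type) [AddCommGroup V] [Module ℂ V]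

/-- A volume form `vol : ⋀ᵏV → ℂ` extended to the whole exterior algebra by composing with
the projection onto the degree-`k` graded component; on `⋀ᵏV` it agrees with `vol`. -/
def volC (k : ℕ) (vol : ⋀[ℂ]^k V →ₗ[ℂ] ℂ) : ExteriorAlgebra ℂ V →ₗ[ℂ] ℂ :=
  vol ∘ₗ (DirectSum.component ℂ ℕ (fun i => ↥(⋀[ℂ]^i V)) k) ∘ₗ
    (DirectSum.decomposeLinearEquiv (fun i : ℕ => ⋀[ℂ]^i V)).toLinearMap

/-- The image of `⋀ᵏW` inside the exterior algebra of `V`, for a subspace `W ⊆ V`. -/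
def extPow (W : Submodule ℂ V) (k : ℕ) : Submodule ℂ (ExteriorAlgebra ℂ V) :=
  (Submodule.map (ExteriorAlgebra.ι ℂ) W) ^ k

/-- The Lagrangian subspace `A(W,q)` associated to a subspace `W ⊆ ⋀²V₅` and a bilinear
form `q` on `W`:  `A(W,q) = {η + x∧w : w ∈ W, η ∈ ⋀³V₅, vol(x∧η∧w') = -q(w,w') ∀ w' ∈ W}`. -/
def AWq (vol : ⋀[ℂ]^6 V →ₗ[ℂ] ℂ) (x : V) (V₅ : Submodule ℂ V)
    (W : Submodule ℂ (ExteriorAlgebra ℂ V)) (q : W →ₗ[ℂ] W →ₗ[ℂ] ℂ) :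
    Submodule ℂ (ExteriorAlgebra ℂ V) where
  carrier := {z | ∃ w : W, ∃ η ∈ extPow V V₅ 3,
    z = η + ExteriorAlgebra.ι ℂ x * (w : ExteriorAlgebra ℂ V) ∧
    ∀ w' : W, volC V 6 vol (ExteriorAlgebra.ι ℂ x * η * (w' : ExteriorAlgebra ℂ V)) = - q w w'}
  add_mem' := by
    rintro a b ⟨w, η, hη, rfl, hc⟩ ⟨w', η', hη', rfl, hc'⟩
    refine ⟨w + w', η + η', add_mem hη hη', ?_, ?_⟩
    · rw [Submodule.coe_add, mul_add]
      abel
    · intro w₀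
      have h1 : ExteriorAlgebra.ι ℂ x * (η + η') * (w₀ : ExteriorAlgebra ℂ V)
          = ExteriorAlgebra.ι ℂ x * η * (w₀ : ExteriorAlgebra ℂ V)
            + ExteriorAlgebra.ι ℂ x * η' * (w₀ : ExteriorAlgebra ℂ V) := by
        rw [mul_add, add_mul]
      rw [h1, map_add, hc w₀, hc' w₀, map_add, LinearMap.add_apply]
      ring
  zero_mem' := by
    refine ⟨0, 0, zero_mem _, by simp, ?_⟩
    intro w'
    simp
  smul_mem' := by
    rintro c a ⟨w, η, hη, rfl, hc⟩
    refine ⟨c • w, c • η, Submodule.smul_mem _ c hη, ?_, ?_⟩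
    · rw [Submodule.coe_smul, smul_add, mul_smul_comm]
    · intro w₀
      have h1 : ExteriorAlgebra.ι ℂ x * (c • η) * (w₀ : ExteriorAlgebra ℂ V)
          = c • (ExteriorAlgebra.ι ℂ x * η * (w₀ : ExteriorAlgebra ℂ V)) := by
        rw [mul_smul_comm, smul_mul_assoc]
      rw [h1, map_smul, hc w₀, map_smul, LinearMap.smul_apply, smul_eq_mul, smul_eq_mul]
      ring

/-- The subspace `W = λ₃(A) ⊆ ⋀²V₅` associated to a Lagrangian subspace `A`:
the set of `w ∈ ⋀²V₅` such that `η + x∧w ∈ A` for some `η ∈ ⋀³V₅`. -/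
def Wof (x : V) (V₅ : Submodule ℂ V) (A : Submodule ℂ (ExteriorAlgebra ℂ V)) :
    Submodule ℂ (ExteriorAlgebra ℂ V) where
  carrier := {w | w ∈ extPow V V₅ 2 ∧ ∃ η ∈ extPow V V₅ 3,
    η + ExteriorAlgebra.ι ℂ x * w ∈ A}
  add_mem' := by
    rintro a b ⟨ha, η, hη, hA⟩ ⟨hb, η', hη', hA'⟩
    refine ⟨add_mem ha hb, η + η', add_mem hη hη', ?_⟩
    have heq : η + η' + ExteriorAlgebra.ι ℂ x * (a + b) =
        (η + ExteriorAlgebra.ι ℂ x * a) + (η' + ExteriorAlgebra.ι ℂ x * b) := by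
      rw [mul_add]; abel
    rw [heq]
    exact add_mem hA hA'
  zero_mem' := by
    refine ⟨zero_mem _, 0, zero_mem _, ?_⟩
    simp
  smul_mem' := by
    rintro c a ⟨ha, η, hη, hA⟩
    refine ⟨Submodule.smul_mem _ c ha, c • η, Submodule.smul_mem _ c hη, ?_⟩
    have heq : c • η + ExteriorAlgebra.ι ℂ x * (c • a)
        = c • (η + ExteriorAlgebra.ι ℂ x * a) := by
      rw [mul_smul_comm, smul_add]
    rw [heq]
    exact A.smul_mem c hA

end EPW

/-!
Choose `d : V → ℂ` with kernel `V₅` and `d x = 1`. Every `a ∈ ⋀³V` is `η + x∧w` with `η`, `w` over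
`V₅`, and contraction with `d` sends it to `w`; so `W` is the image of `A` under contraction,
`A ∩ ⋀³V₅` is the kernel, and rank-nullity gives `dim W`.

Since `⋀⁶V₅ = 0` and `x∧x = 0`, expanding the product gives
`ω(η + x∧w, η' + x∧w') = vol(x∧η'∧w) - vol(x∧η∧w')`. Isotropy of `A` thus says
`vol(x∧η∧w') = vol(x∧η'∧w)`: the right-hand side is independent of `η`, so `q` is well defined,
and the equation itself is its symmetry. Conversely, symmetry of `q` makes `A(W,q)` orthogonal to
`A`, so `A(W,q) ⊆ A` because a Lagrangian subspace is its own orthogonal.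

Nondegeneracy of `ω` comes from the identity `∑ᵢ bᵢ∧(bᵢ^*⌟a) = k a` for `a ∈ ⋀ᵏV`: it implies
`∑ᵢ bᵢ^*⌟(bᵢ∧a) = (n - k) a`, so for `k < n = dim V` a form killed by all vectors vanishes, and
induction on the degree extends this from vectors to `⋀ᵐV` with `k + m ≤ n`.
-/

namespace EPW

open CliffordAlgebra (contractLeft contractLeft_algebraMap)

theorem add_pow_succ_le {α : Type*} [IdemSemiring α] {p q : α} (hq : q * q = 0)
    (hpq : p * q ≤ q * p) (k : ℕ) : (p + q) ^ (k + 1) ≤ p ^ (k + 1) + q * p ^ k := by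
  induction k with
  | zero => simp
  | succ k ih =>
    have hp : p * (q * p ^ k) ≤ q * p ^ (k + 1) := by
      rw [← mul_assoc, pow_succ', ← mul_assoc]
      exact mul_le_mul_left hpq _
    calc (p + q) ^ (k + 1 + 1)
        ≤ (p + q) * (p ^ (k + 1) + q * p ^ k) := by
          rw [pow_succ' (p + q)]
          exact mul_le_mul_right ih _
      _ = p ^ (k + 1 + 1) + p * (q * p ^ k) + q * p ^ (k + 1) := by
          rw [add_mul, mul_add, mul_add, ← mul_assoc q q, hq, zero_mul, add_zero,
            pow_succ' p (k + 1)]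
      _ ≤ p ^ (k + 1 + 1) + q * p ^ (k + 1) := by
          rw [add_assoc]
          exact add_le_add_right (add_le hp le_rfl) _

section CommRing

variable {R M : Type*} [CommRing R] [AddCommGroup M] [Module R M]

theorem ι_mul_ι_eq_neg (u v : M) : ι R u * ι R v = -(ι R v * ι R u) :=
  eq_neg_of_add_eq_zero_left (ι_add_mul_swap u v)

theorem ι_mem_exteriorPower_one (v : M) : ι R v ∈ ⋀[R]^1 M := by
  rw [exteriorPower, pow_one]
  exact LinearMap.mem_range_self _ v

theorem mul_ι_of_mem_exteriorPower (v : M) {i : ℕ} {a : ExteriorAlgebra R M}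
    (ha : a ∈ ⋀[R]^i M) : a * ι R v = (-1 : R) ^ i • (ι R v * a) := by
  induction ha using Submodule.pow_induction_on_left' with
  | algebraMap r => rw [pow_zero, one_smul, Algebra.commutes]
  | add a b i _ _ iha ihb => rw [add_mul, iha, ihb, mul_add, smul_add]
  | mem_mul m hm i a _ ih =>
    obtain ⟨u, rfl⟩ := hm
    rw [mul_assoc, ih, mul_smul_comm, ← mul_assoc, ι_mul_ι_eq_neg u v, pow_succ, neg_mul, mul_assoc,
      mul_neg_one, neg_smul, smul_neg]

theorem mul_comm_of_mem_exteriorPower {i j : ℕ} {a b : ExteriorAlgebra R M}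
    (ha : a ∈ ⋀[R]^i M) (hb : b ∈ ⋀[R]^j M) : a * b = (-1 : R) ^ (i * j) • (b * a) := by
  induction ha using Submodule.pow_induction_on_left' with
  | algebraMap r => rw [zero_mul, pow_zero, one_smul, Algebra.commutes]
  | add a a' i _ _ ih ih' => rw [add_mul, ih, ih', mul_add, smul_add]
  | mem_mul m hm i a _ ih =>
    obtain ⟨u, rfl⟩ := hm
    rw [mul_assoc, ih, mul_smul_comm, ← mul_assoc b, mul_ι_of_mem_exteriorPower u hb,
      smul_mul_assoc, smul_smul, mul_assoc, ← pow_add, Nat.succ_mul, add_assoc, ← two_mul, pow_add,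
      pow_mul _ 2, neg_one_sq, one_pow, mul_one]

theorem add_ι_mul_mul_add_ι_mul (x : M) {i j l : ℕ} {η η' w : ExteriorAlgebra R M}
    (hη : η ∈ ⋀[R]^i M) (hη' : η' ∈ ⋀[R]^j M) (hw : w ∈ ⋀[R]^l M) (w' : ExteriorAlgebra R M) :
    (η + ι R x * w) * (η' + ι R x * w') =
      η * η' + (-1 : R) ^ i • (ι R x * η * w') + (-1 : R) ^ (l * j) • (ι R x * η' * w) := by
  have hηx : η * (ι R x * w') = (-1 : R) ^ i • (ι R x * η * w') := by
    rw [← mul_assoc, mul_ι_of_mem_exteriorPower x hη, smul_mul_assoc]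
  have hwη' : ι R x * w * η' = (-1 : R) ^ (l * j) • (ι R x * η' * w) := by
    rw [mul_assoc, mul_comm_of_mem_exteriorPower hw hη', mul_smul_comm, mul_assoc]
  have hxx : ι R x * w * (ι R x * w') = 0 := by
    rw [mul_assoc, ← mul_assoc w, mul_ι_of_mem_exteriorPower x hw, smul_mul_assoc, mul_smul_comm,
      mul_assoc, ← mul_assoc (ι R x), ι_sq_zero, zero_mul, smul_zero]
  rw [add_mul, mul_add, mul_add, hηx, hwη', hxx, add_zero]

theorem contractLeft_ι_mul (d : Dual R M) (v : M) (a : ExteriorAlgebra R M) :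
    contractLeft d (ι R v * a) = d v • a - ι R v * contractLeft d a :=
  CliffordAlgebra.contractLeft_ι_mul d v a

section Hyperplane

variable {d : Dual R M} {x : M}

theorem contractLeft_eq_zero_of_mem_map_ι_ker_pow {k : ℕ} {a : ExteriorAlgebra R M}
    (ha : a ∈ (LinearMap.ker d).map (ι R) ^ k) : contractLeft d a = 0 := by
  induction ha using Submodule.pow_induction_on_left' with
  | algebraMap r => exact contractLeft_algebraMap _ d r
  | add a b _ _ _ iha ihb => rw [map_add, iha, ihb, add_zero]
  | mem_mul m hm _ a _ ih =>
    obtain ⟨u, hu, rfl⟩ := hm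
    rw [contractLeft_ι_mul, LinearMap.mem_ker.1 hu, ih, zero_smul, mul_zero, sub_zero]

theorem contractLeft_add_ι_mul (hx : d x = 1) {k l : ℕ} {η w : ExteriorAlgebra R M}
    (hη : η ∈ (LinearMap.ker d).map (ι R) ^ k) (hw : w ∈ (LinearMap.ker d).map (ι R) ^ l) :
    contractLeft d (η + ι R x * w) = w := by
  rw [map_add, contractLeft_ι_mul, contractLeft_eq_zero_of_mem_map_ι_ker_pow hη,
    contractLeft_eq_zero_of_mem_map_ι_ker_pow hw, hx, one_smul, mul_zero, sub_zero, zero_add]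

theorem range_ι_le_map_ι_ker_sup_span (hx : d x = 1) :
    LinearMap.range (ι R (M := M)) ≤ (LinearMap.ker d).map (ι R) + R ∙ ι R x := by
  rintro _ ⟨v, rfl⟩
  have hv : v - d v • x ∈ LinearMap.ker d := by simp [hx]
  refine Submodule.mem_sup.2 ⟨_, Submodule.mem_map_of_mem hv, d v • ι R x,
    Submodule.smul_mem _ _ (Submodule.mem_span_singleton_self _), ?_⟩
  rw [map_sub, map_smul, sub_add_cancel]

theorem exists_eq_add_ι_mul_of_mem_exteriorPower (hx : d x = 1) {k : ℕ} {a : ExteriorAlgebra R M}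
    (ha : a ∈ ⋀[R]^(k + 1) M) :
    ∃ η ∈ (LinearMap.ker d).map (ι R) ^ (k + 1), ∃ w ∈ (LinearMap.ker d).map (ι R) ^ k,
      η + ι R x * w = a := by
  have hxx : (R ∙ ι R x) * (R ∙ ι R x) = 0 := by
    rw [Submodule.span_mul_span, Set.singleton_mul_singleton, ι_sq_zero,
      Submodule.span_zero_singleton, Submodule.zero_eq_bot]
  have hcomm : (LinearMap.ker d).map (ι R) * (R ∙ ι R x) ≤
      (R ∙ ι R x) * (LinearMap.ker d).map (ι R) := by
    refine Submodule.mul_le.2 ?_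
    rintro _ ⟨u, hu, rfl⟩ _ hz
    obtain ⟨c, rfl⟩ := Submodule.mem_span_singleton.1 hz
    rw [mul_smul_comm, ι_mul_ι_eq_neg]
    exact Submodule.smul_mem _ _ <| neg_mem <|
      Submodule.mem_span_singleton_mul.2 ⟨_, Submodule.mem_map_of_mem hu, rfl⟩
  have ha' := add_pow_succ_le hxx hcomm k
    (pow_le_pow_left' (range_ι_le_map_ι_ker_sup_span hx) (k + 1) ha)
  obtain ⟨η, hη, _, hz, rfl⟩ := Submodule.mem_sup.1 ha'
  obtain ⟨w, hw, rfl⟩ := Submodule.mem_span_singleton_mul.1 hz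
  exact ⟨η, hη, w, hw, rfl⟩

theorem contractLeft_eq_zero_iff_of_mem_exteriorPower (hx : d x = 1) {k : ℕ}
    {a : ExteriorAlgebra R M} (ha : a ∈ ⋀[R]^(k + 1) M) :
    contractLeft d a = 0 ↔ a ∈ (LinearMap.ker d).map (ι R) ^ (k + 1) := by
  refine ⟨fun h ↦ ?_, contractLeft_eq_zero_of_mem_map_ι_ker_pow⟩
  obtain ⟨η, hη, w, hw, rfl⟩ := exists_eq_add_ι_mul_of_mem_exteriorPower hx ha
  rw [contractLeft_add_ι_mul hx hη hw] at h
  rwa [h, mul_zero, add_zero]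

end Hyperplane

section Basis

variable {I : Type*} [Fintype I] (b : Basis I R M)

theorem sum_ι_mul_contractLeft_coord {k : ℕ} {a : ExteriorAlgebra R M} (ha : a ∈ ⋀[R]^k M) :
    ∑ i, ι R (b i) * contractLeft (b.coord i) a = (k : R) • a := by
  induction ha using Submodule.pow_induction_on_left' with
  | algebraMap r => simp [contractLeft_algebraMap]
  | add a a' k _ _ ih ih' => simp only [map_add, mul_add, Finset.sum_add_distrib, ih, ih', smul_add]
  | mem_mul m hm k a _ ih =>
    obtain ⟨u, rfl⟩ := hm
    have hterm (i : I) : ι R (b i) * contractLeft (b.coord i) (ι R u * a) =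
        ι R (b.repr u i • b i) * a + ι R u * (ι R (b i) * contractLeft (b.coord i) a) := by
      rw [contractLeft_ι_mul, mul_sub, ← mul_assoc (ι R (b i)), ι_mul_ι_eq_neg (b i) u, neg_mul,
        sub_neg_eq_add, mul_assoc, mul_smul_comm, map_smul, smul_mul_assoc, b.coord_apply]
    calc ∑ i, ι R (b i) * contractLeft (b.coord i) (ι R u * a)
        = ι R (∑ i, b.repr u i • b i) * a +
            ι R u * ∑ i, ι R (b i) * contractLeft (b.coord i) a := by
          simp only [hterm, Finset.sum_add_distrib, map_sum, Finset.sum_mul, Finset.mul_sum]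
      _ = ((k + 1 : ℕ) : R) • (ι R u * a) := by
          rw [b.sum_repr, ih, mul_smul_comm, Nat.cast_succ, add_smul, one_smul, add_comm]

theorem sum_contractLeft_coord_ι_mul {k : ℕ} {a : ExteriorAlgebra R M} (ha : a ∈ ⋀[R]^k M) :
    ∑ i, contractLeft (b.coord i) (ι R (b i) * a) = ((Fintype.card I : R) - k) • a := by
  have hterm (i : I) : contractLeft (b.coord i) (ι R (b i) * a) =
      a - ι R (b i) * contractLeft (b.coord i) a := by
    rw [contractLeft_ι_mul, b.coord_apply, b.repr_self, Finsupp.single_eq_same, one_smul]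
  simp only [hterm, Finset.sum_sub_distrib, sum_ι_mul_contractLeft_coord b ha, Finset.sum_const,
    Finset.card_univ, sub_smul, Nat.cast_smul_eq_nsmul]

end Basis

/-- The bilinear form `(a, b) ↦ φ (a ∧ b)` on `⋀ᵏM`; for `φ` a volume form on a space of dimension
`6` and `k = 3` it is the form `ω`. -/
def wedgeForm (φ : ExteriorAlgebra R M →ₗ[R] R) (k : ℕ) : LinearMap.BilinForm R (⋀[R]^k M) :=
  ((LinearMap.mul R (ExteriorAlgebra R M)).compr₂ φ).domRestrict₁₂ (⋀[R]^k M) (⋀[R]^k M)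

end CommRing

section Field

variable {K V : Type*} [Field K] [AddCommGroup V] [Module K V]

theorem exists_dual_ker_eq {W : Submodule K V} (hW : finrank K W + 1 = finrank K V) {x : V}
    (hx : x ∉ W) : ∃ d : Dual K V, LinearMap.ker d = W ∧ d x = 1 := by
  have : FiniteDimensional K V := finite_of_finrank_pos (by omega)
  obtain ⟨f, hfx, hWf⟩ := Submodule.exists_le_ker_of_notMem hx
  have hf : f ≠ 0 := fun h ↦ hfx (by rw [h, LinearMap.zero_apply])
  have hker : LinearMap.ker f = W := by
    refine (Submodule.eq_of_le_of_finrank_eq hWf ?_).symm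
    have := Dual.finrank_ker_add_one_of_ne_zero hf
    omega
  refine ⟨(f x)⁻¹ • f, ?_, inv_mul_cancel₀ hfx⟩
  rw [LinearMap.ker_smul _ _ (inv_ne_zero hfx), hker]

theorem map_ι_pow_eq_bot {W : Submodule K V} [FiniteDimensional K W] {n : ℕ}
    (hn : finrank K W < n) : W.map (ι K) ^ n = ⊥ := by
  have hW : LinearMap.range (ι K (M := W)) ^ n = ⊥ := by
    rw [← Submodule.finrank_eq_zero (R := K), ← exteriorPower, exteriorPower.finrank_eq,
      Nat.choose_eq_zero_of_lt hn]
  have hmap : W.map (ι K) = (LinearMap.range (ι K (M := W))).map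
      (ExteriorAlgebra.map W.subtype).toLinearMap := by
    rw [ι_range_map_map, Submodule.range_subtype]
  rw [hmap, ← Submodule.map_pow, hW, Submodule.map_bot]

theorem eq_zero_of_forall_ι_mul_eq_zero [CharZero K] {k : ℕ} (hk : k < finrank K V)
    {a : ExteriorAlgebra K V} (ha : a ∈ ⋀[K]^k V) (h : ∀ v, ι K v * a = 0) : a = 0 := by
  have : FiniteDimensional K V := finite_of_finrank_pos (by omega)
  have hsum := sum_contractLeft_coord_ι_mul (finBasis K V) ha
  simp only [h, map_zero, Finset.sum_const_zero, Fintype.card_fin] at hsum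
  refine (smul_eq_zero.1 hsum.symm).resolve_left ?_
  rw [sub_eq_zero, Nat.cast_inj]
  exact hk.ne'

theorem eq_zero_of_forall_mul_eq_zero [CharZero K] {k m : ℕ} (hkm : k + m ≤ finrank K V)
    {a : ExteriorAlgebra K V} (ha : a ∈ ⋀[K]^k V) (h : ∀ c ∈ ⋀[K]^m V, c * a = 0) : a = 0 := by
  induction m generalizing k a with
  | zero => simpa only [one_mul] using h 1 SetLike.GradedOne.one_mem
  | succ m ih =>
    refine eq_zero_of_forall_ι_mul_eq_zero (by omega) ha fun v ↦ ?_
    refine ih (k := 1 + k) (by omega) (SetLike.mul_mem_graded (ι_mem_exteriorPower_one v) ha)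
      fun c hc ↦ ?_
    rw [← mul_assoc]
    exact h _ (SetLike.mul_mem_graded hc (ι_mem_exteriorPower_one v))

theorem wedgeForm_nondegenerate [CharZero K] {φ : ExteriorAlgebra K V →ₗ[K] K} {k : ℕ}
    (hφ : ∀ a ∈ ⋀[K]^(k + k) V, φ a = 0 → a = 0) (hk : k + k ≤ finrank K V) :
    (wedgeForm φ k).Nondegenerate := by
  constructor
  · intro a ha
    refine Subtype.ext (eq_zero_of_forall_mul_eq_zero hk a.2 fun c hc ↦ ?_)
    rw [mul_comm_of_mem_exteriorPower hc a.2,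
      hφ _ (SetLike.mul_mem_graded a.2 hc) (ha ⟨c, hc⟩), smul_zero]
  · intro a ha
    exact Subtype.ext (eq_zero_of_forall_mul_eq_zero hk a.2 fun c hc ↦
      hφ _ (SetLike.mul_mem_graded hc a.2) (ha ⟨c, hc⟩))

theorem orthogonal_eq_self_of_le [FiniteDimensional K V] {B : LinearMap.BilinForm K V}
    (hB : B.Nondegenerate) {L : Submodule K V} (hL : L ≤ B.orthogonal L)
    (hdim : 2 * finrank K L = finrank K V) : B.orthogonal L = L := by
  refine (Submodule.eq_of_le_of_finrank_eq hL ?_).symm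
  rw [LinearMap.BilinForm.finrank_orthogonal hB]
  omega

end Field

variable {V : Type} [AddCommGroup V] [Module ℂ V]

theorem volC_of_mem {k : ℕ} (vol : ⋀[ℂ]^k V →ₗ[ℂ] ℂ) {a : ExteriorAlgebra ℂ V}
    (ha : a ∈ ⋀[ℂ]^k V) : volC V k vol a = vol ⟨a, ha⟩ :=
  congrArg vol (Subtype.ext (DirectSum.decompose_of_mem_same (fun i : ℕ ↦ ⋀[ℂ]^i V) ha))

theorem extPow_le_exteriorPower (W : Submodule ℂ V) (k : ℕ) : extPow V W k ≤ ⋀[ℂ]^k V :=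
  pow_le_pow_left' LinearMap.map_le_range k

/-- Lagrangian subspaces of `(⋀³V, ω)` for `dim V = 6`, as subspaces of the exterior algebra. -/
structure IsLagrangian (vol : ⋀[ℂ]^6 V →ₗ[ℂ] ℂ) (A : Submodule ℂ (ExteriorAlgebra ℂ V)) :
    Prop where
  le_exteriorPower : A ≤ ⋀[ℂ]^3 V
  finrank_eq : finrank ℂ A = 10
  isotropic : ∀ a b, a ∈ A → b ∈ A → volC V 6 vol (a * b) = 0

theorem IsLagrangian.mem_of_forall_volC_mul_eq_zero {vol : ⋀[ℂ]^6 V →ₗ[ℂ] ℂ}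
    {A : Submodule ℂ (ExteriorAlgebra ℂ V)} (hA : IsLagrangian vol A) (hdim : finrank ℂ V = 6)
    (hvol : Function.Injective vol) {z : ExteriorAlgebra ℂ V} (hz : z ∈ ⋀[ℂ]^3 V)
    (h : ∀ a ∈ A, volC V 6 vol (a * z) = 0) : z ∈ A := by
  have : FiniteDimensional ℂ V := finite_of_finrank_pos (by omega)
  have hω : (wedgeForm (volC V 6 vol) 3).Nondegenerate := by
    refine wedgeForm_nondegenerate (fun a ha h0 ↦ ?_) hdim.ge
    rw [volC_of_mem vol ha, map_eq_zero_iff vol hvol] at h0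
    exact congrArg Subtype.val h0
  have hL : finrank ℂ (A.comap (⋀[ℂ]^3 V).subtype) = 10 :=
    (Submodule.comapSubtypeEquivOfLe hA.le_exteriorPower).finrank_eq.trans hA.finrank_eq
  have horth := orthogonal_eq_self_of_le hω (L := A.comap (⋀[ℂ]^3 V).subtype)
    (fun b hb a ha ↦ hA.isotropic a b ha hb)
    (by rw [hL, exteriorPower.finrank_eq, hdim]; rfl)
  have hz' : ⟨z, hz⟩ ∈ (wedgeForm (volC V 6 vol) 3).orthogonal (A.comap (⋀[ℂ]^3 V).subtype) :=
    fun a ha ↦ h a ha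
  rwa [horth] at hz'

/-- `q` is the form on `W = Wof V x V₅ A` induced by `A`: `q(w, w') = -vol(x ∧ η ∧ w')` whenever
`η + x ∧ w ∈ A`. -/
def IsInducedForm (vol : ⋀[ℂ]^6 V →ₗ[ℂ] ℂ) (x : V) (V₅ : Submodule ℂ V)
    (A : Submodule ℂ (ExteriorAlgebra ℂ V)) (q : Wof V x V₅ A →ₗ[ℂ] Wof V x V₅ A →ₗ[ℂ] ℂ) : Prop :=
  ∀ (w w' : Wof V x V₅ A) (η : ExteriorAlgebra ℂ V), η ∈ extPow V V₅ 3 →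
    η + ι ℂ x * (w : ExteriorAlgebra ℂ V) ∈ A →
      q w w' = -volC V 6 vol (ι ℂ x * η * (w' : ExteriorAlgebra ℂ V))

section Induced

variable {vol : ⋀[ℂ]^6 V →ₗ[ℂ] ℂ} {A : Submodule ℂ (ExteriorAlgebra ℂ V)}

theorem IsInducedForm.eq {x : V} {V₅ : Submodule ℂ V}
    {q q' : Wof V x V₅ A →ₗ[ℂ] Wof V x V₅ A →ₗ[ℂ] ℂ}
    (hq : IsInducedForm vol x V₅ A q) (hq' : IsInducedForm vol x V₅ A q') : q = q' := by
  ext w w'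
  obtain ⟨-, η, hη, hηA⟩ := w.2
  rw [hq w w' η hη hηA, hq' w w' η hη hηA]

variable {d : Dual ℂ V} {x : V}

theorem Wof_ker_eq_map_contractLeft (hx : d x = 1) (hA : A ≤ ⋀[ℂ]^3 V) :
    Wof V x (LinearMap.ker d) A = A.map (contractLeft d) := by
  ext w
  constructor
  · rintro ⟨hw, η, hη, hηA⟩
    exact ⟨_, hηA, contractLeft_add_ι_mul hx hη hw⟩
  · rintro ⟨a, ha, rfl⟩
    obtain ⟨η, hη, w, hw, rfl⟩ := exists_eq_add_ι_mul_of_mem_exteriorPower hx (hA ha)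
    rw [contractLeft_add_ι_mul hx hη hw]
    exact ⟨hw, η, hη, ha⟩

theorem inf_extPow_ker_eq_inf_ker_contractLeft (hx : d x = 1) (hA : A ≤ ⋀[ℂ]^3 V) :
    A ⊓ extPow V (LinearMap.ker d) 3 = A ⊓ LinearMap.ker (contractLeft d) :=
  Submodule.ext fun _ ↦ and_congr_right fun ha ↦
    (contractLeft_eq_zero_iff_of_mem_exteriorPower hx (hA ha)).symm

theorem finrank_Wof_add_finrank_inf_extPow [FiniteDimensional ℂ A] (hx : d x = 1)
    (hA : A ≤ ⋀[ℂ]^3 V) :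
    finrank ℂ (Wof V x (LinearMap.ker d) A) +
      finrank ℂ (A ⊓ extPow V (LinearMap.ker d) 3 : Submodule ℂ (ExteriorAlgebra ℂ V)) =
        finrank ℂ A := by
  have h := LinearMap.finrank_range_add_finrank_ker ((contractLeft d).domRestrict A)
  rwa [LinearMap.range_domRestrict, ← Wof_ker_eq_map_contractLeft hx hA, LinearMap.ker_domRestrict,
    ← Submodule.finrank_map_subtype_eq, Submodule.map_comap_subtype,
    ← inf_extPow_ker_eq_inf_ker_contractLeft hx hA] at h

theorem volC_add_ι_mul_mul_add_ι_mul (hdim : finrank ℂ V = 6) (hx : d x = 1)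
    {η η' w : ExteriorAlgebra ℂ V} (hη : η ∈ extPow V (LinearMap.ker d) 3)
    (hη' : η' ∈ extPow V (LinearMap.ker d) 3) (hw : w ∈ extPow V (LinearMap.ker d) 2)
    (w' : ExteriorAlgebra ℂ V) :
    volC V 6 vol ((η + ι ℂ x * w) * (η' + ι ℂ x * w')) =
      volC V 6 vol (ι ℂ x * η' * w) - volC V 6 vol (ι ℂ x * η * w') := by
  have : FiniteDimensional ℂ V := finite_of_finrank_pos (by omega)
  have hd : d ≠ 0 := fun h ↦ by simp [h] at hx
  have hker : finrank ℂ (LinearMap.ker d) < 3 + 3 := by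
    have := Dual.finrank_ker_add_one_of_ne_zero hd
    omega
  have hηη' : η * η' = 0 := by
    rw [← Submodule.mem_bot ℂ, ← map_ι_pow_eq_bot hker, pow_add]
    exact Submodule.mul_mem_mul hη hη'
  rw [add_ι_mul_mul_add_ι_mul x (extPow_le_exteriorPower _ _ hη) (extPow_le_exteriorPower _ _ hη')
    (extPow_le_exteriorPower _ _ hw), hηη', ← map_sub]
  congr 1
  module

theorem volC_ι_mul_mul_eq_of_isotropic (hdim : finrank ℂ V = 6) (hx : d x = 1)
    (hA : ∀ a b, a ∈ A → b ∈ A → volC V 6 vol (a * b) = 0) {η η' w w' : ExteriorAlgebra ℂ V}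
    (hη : η ∈ extPow V (LinearMap.ker d) 3) (hη' : η' ∈ extPow V (LinearMap.ker d) 3)
    (hw : w ∈ extPow V (LinearMap.ker d) 2) (h : η + ι ℂ x * w ∈ A) (h' : η' + ι ℂ x * w' ∈ A) :
    volC V 6 vol (ι ℂ x * η * w') = volC V 6 vol (ι ℂ x * η' * w) := by
  have h0 := hA _ _ h h'
  rw [volC_add_ι_mul_mul_add_ι_mul hdim hx hη hη' hw] at h0
  exact (sub_eq_zero.1 h0).symm

theorem volC_ι_mul_mul_congr_of_isotropic (hdim : finrank ℂ V = 6) (hx : d x = 1)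
    (hA : ∀ a b, a ∈ A → b ∈ A → volC V 6 vol (a * b) = 0) {η η' w w' : ExteriorAlgebra ℂ V}
    (hw : w ∈ extPow V (LinearMap.ker d) 2) (hw' : w' ∈ Wof V x (LinearMap.ker d) A)
    (hη : η ∈ extPow V (LinearMap.ker d) 3) (hη' : η' ∈ extPow V (LinearMap.ker d) 3)
    (h : η + ι ℂ x * w ∈ A) (h' : η' + ι ℂ x * w ∈ A) :
    volC V 6 vol (ι ℂ x * η * w') = volC V 6 vol (ι ℂ x * η' * w') := by
  obtain ⟨-, ζ, hζ, hζA⟩ := hw'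
  rw [volC_ι_mul_mul_eq_of_isotropic hdim hx hA hη hζ hw h hζA,
    volC_ι_mul_mul_eq_of_isotropic hdim hx hA hη' hζ hw h' hζA]

theorem exists_section_contractLeft (hx : d x = 1) (hA : A ≤ ⋀[ℂ]^3 V) :
    ∃ s : Wof V x (LinearMap.ker d) A →ₗ[ℂ] A,
      ∀ w, contractLeft d (s w : ExteriorAlgebra ℂ V) = w := by
  have hmap (a : A) : contractLeft d (a : ExteriorAlgebra ℂ V) ∈ Wof V x (LinearMap.ker d) A :=
    Wof_ker_eq_map_contractLeft hx hA ▸ Submodule.mem_map_of_mem a.2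
  have hsurj (w : Wof V x (LinearMap.ker d) A) :
      ∃ a, ((contractLeft d).domRestrict A).codRestrict _ hmap a = w := by
    obtain ⟨hw, η, hη, hηA⟩ := w.2
    exact ⟨⟨_, hηA⟩, Subtype.ext (contractLeft_add_ι_mul hx hη hw)⟩
  obtain ⟨s, hs⟩ := LinearMap.exists_rightInverse_of_surjective _ (LinearMap.range_eq_top.2 hsurj)
  exact ⟨s, fun w ↦ congrArg Subtype.val (LinearMap.congr_fun hs w)⟩

theorem exists_isInducedForm (hdim : finrank ℂ V = 6) (hx : d x = 1) (hA3 : A ≤ ⋀[ℂ]^3 V)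
    (hA : ∀ a b, a ∈ A → b ∈ A → volC V 6 vol (a * b) = 0) :
    ∃ q, IsInducedForm vol x (LinearMap.ker d) A q := by
  obtain ⟨s, hs⟩ := exists_section_contractLeft hx hA3
  -- `x∧(η + x∧w) = x∧η`, so `s w` can stand for the `η` of `w`, and it is linear in `w`.
  let β : ExteriorAlgebra ℂ V →ₗ[ℂ] ExteriorAlgebra ℂ V →ₗ[ℂ] ℂ :=
    -(LinearMap.mul ℂ (ExteriorAlgebra ℂ V) ∘ₗ LinearMap.mulLeft ℂ (ι ℂ x)).compr₂ (volC V 6 vol)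
  refine ⟨β.compl₁₂ (A.subtype ∘ₗ s) (Wof V x (LinearMap.ker d) A).subtype, fun w w' η hη hηA ↦ ?_⟩
  obtain ⟨η₀, hη₀, w₀, hw₀, hs₀⟩ := exists_eq_add_ι_mul_of_mem_exteriorPower hx (hA3 (s w).2)
  have hw : w₀ = w := by rw [← contractLeft_add_ι_mul hx hη₀ hw₀, hs₀, hs]
  subst hw
  have hxs : ι ℂ x * (s w : ExteriorAlgebra ℂ V) = ι ℂ x * η₀ := by
    rw [← hs₀, mul_add, ← mul_assoc, ι_sq_zero, zero_mul, add_zero]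
  calc -volC V 6 vol (ι ℂ x * (s w : ExteriorAlgebra ℂ V) * w')
      = -volC V 6 vol (ι ℂ x * η₀ * w') := by rw [hxs]
    _ = -volC V 6 vol (ι ℂ x * η * w') := by
      rw [volC_ι_mul_mul_congr_of_isotropic hdim hx hA hw₀ w'.2 hη₀ hη (hs₀ ▸ (s w).2) hηA]

theorem isInducedForm_of_le_AWq (hx : d x = 1)
    {q : Wof V x (LinearMap.ker d) A →ₗ[ℂ] Wof V x (LinearMap.ker d) A →ₗ[ℂ] ℂ}
    (h : A ≤ AWq V vol x (LinearMap.ker d) (Wof V x (LinearMap.ker d) A) q) :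
    IsInducedForm vol x (LinearMap.ker d) A q := by
  intro w w' η hη hηA
  obtain ⟨w₁, η₁, hη₁, heq, hw₁⟩ := h hηA
  have hw : w = w₁ := Subtype.ext <| by
    rw [← contractLeft_add_ι_mul hx hη w.2.1, heq, contractLeft_add_ι_mul hx hη₁ w₁.2.1]
  subst hw
  rw [add_right_cancel heq, hw₁ w', neg_neg]

theorem IsInducedForm.symm (hdim : finrank ℂ V = 6) (hx : d x = 1)
    (hA : ∀ a b, a ∈ A → b ∈ A → volC V 6 vol (a * b) = 0)
    {q : Wof V x (LinearMap.ker d) A →ₗ[ℂ] Wof V x (LinearMap.ker d) A →ₗ[ℂ] ℂ}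
    (hq : IsInducedForm vol x (LinearMap.ker d) A q) (w w' : Wof V x (LinearMap.ker d) A) :
    q w w' = q w' w := by
  obtain ⟨hw, η, hη, hηA⟩ := w.2
  obtain ⟨-, η', hη', hηA'⟩ := w'.2
  rw [hq w w' η hη hηA, hq w' w η' hη' hηA',
    volC_ι_mul_mul_eq_of_isotropic hdim hx hA hη hη' hw hηA hηA']

theorem IsInducedForm.le_AWq (hx : d x = 1) (hA : A ≤ ⋀[ℂ]^3 V)
    {q : Wof V x (LinearMap.ker d) A →ₗ[ℂ] Wof V x (LinearMap.ker d) A →ₗ[ℂ] ℂ}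
    (hq : IsInducedForm vol x (LinearMap.ker d) A q) :
    A ≤ AWq V vol x (LinearMap.ker d) (Wof V x (LinearMap.ker d) A) q := by
  intro a ha
  obtain ⟨η, hη, w, hw, rfl⟩ := exists_eq_add_ι_mul_of_mem_exteriorPower hx (hA ha)
  refine ⟨⟨w, hw, η, hη, ha⟩, η, hη, rfl, fun w' ↦ ?_⟩
  rw [hq _ w' η hη ha, neg_neg]

theorem IsInducedForm.AWq_le (hdim : finrank ℂ V = 6) (hvol : Function.Injective vol)
    (hx : d x = 1) (hA : IsLagrangian vol A)
    {q : Wof V x (LinearMap.ker d) A →ₗ[ℂ] Wof V x (LinearMap.ker d) A →ₗ[ℂ] ℂ}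
    (hq : IsInducedForm vol x (LinearMap.ker d) A q) :
    AWq V vol x (LinearMap.ker d) (Wof V x (LinearMap.ker d) A) q ≤ A := by
  rintro _ ⟨w, η, hη, rfl, hηq⟩
  have hxw : ι ℂ x * (w : ExteriorAlgebra ℂ V) ∈ ⋀[ℂ]^(1 + 2) V :=
    SetLike.mul_mem_graded (ι_mem_exteriorPower_one x) (extPow_le_exteriorPower _ _ w.2.1)
  refine hA.mem_of_forall_volC_mul_eq_zero hdim hvol
    (add_mem (extPow_le_exteriorPower _ _ hη) hxw) fun a ha ↦ ?_
  obtain ⟨η', hη', w', hw', rfl⟩ :=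
    exists_eq_add_ι_mul_of_mem_exteriorPower hx (hA.le_exteriorPower ha)
  let w'' : Wof V x (LinearMap.ker d) A := ⟨w', hw', η', hη', ha⟩
  calc volC V 6 vol ((η' + ι ℂ x * w') * (η + ι ℂ x * w))
      = volC V 6 vol (ι ℂ x * η * w'') - volC V 6 vol (ι ℂ x * η' * w) :=
        volC_add_ι_mul_mul_add_ι_mul hdim hx hη' hη hw' _
    _ = q w'' w - q w w'' := by rw [hηq w'', hq w'' w η' hη' ha]; ring
    _ = 0 := sub_eq_zero.2 (hq.symm hdim hx hA.isotropic w'' w)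

end Induced

end EPW

theorem stmt8 (V : Type) [AddCommGroup V] [Module ℂ V]
    (hdim : finrank ℂ V = 6)
    (vol : ⋀[ℂ]^6 V →ₗ[ℂ] ℂ) (hvol : Function.Bijective vol)
    (V₅ : Submodule ℂ V) (hV₅ : finrank ℂ V₅ = 5)
    (x : V) (hx : x ∉ V₅)
    (A : Submodule ℂ (ExteriorAlgebra ℂ V)) (hA3 : A ≤ ⋀[ℂ]^3 V)
    (hA10 : finrank ℂ A = 10)
    (hAlag : ∀ a b : ExteriorAlgebra ℂ V, a ∈ A → b ∈ A → EPW.volC V 6 vol (a * b) = 0) :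
    (∀ w ∈ EPW.Wof V x V₅ A, ∀ w' ∈ EPW.Wof V x V₅ A,
      ∀ η ∈ EPW.extPow V V₅ 3, ∀ η' ∈ EPW.extPow V V₅ 3,
        η + ExteriorAlgebra.ι ℂ x * w ∈ A → η' + ExteriorAlgebra.ι ℂ x * w ∈ A →
        EPW.volC V 6 vol (ExteriorAlgebra.ι ℂ x * η * w')
          = EPW.volC V 6 vol (ExteriorAlgebra.ι ℂ x * η' * w')) ∧
    (∃! q : EPW.Wof V x V₅ A →ₗ[ℂ] EPW.Wof V x V₅ A →ₗ[ℂ] ℂ,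
      (∀ a b, q a b = q b a) ∧ A = EPW.AWq V vol x V₅ (EPW.Wof V x V₅ A) q) ∧
    (∀ q : EPW.Wof V x V₅ A →ₗ[ℂ] EPW.Wof V x V₅ A →ₗ[ℂ] ℂ,
      (∀ (w w' : EPW.Wof V x V₅ A) (η : ExteriorAlgebra ℂ V), η ∈ EPW.extPow V V₅ 3 →
        η + ExteriorAlgebra.ι ℂ x * (w : ExteriorAlgebra ℂ V) ∈ A →
        q w w' = - EPW.volC V 6 vol
          (ExteriorAlgebra.ι ℂ x * η * (w' : ExteriorAlgebra ℂ V))) →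
      ((∀ a b, q a b = q b a) ∧ A = EPW.AWq V vol x V₅ (EPW.Wof V x V₅ A) q)) ∧
    finrank ℂ (EPW.Wof V x V₅ A)
      = 10 - finrank ℂ (A ⊓ EPW.extPow V V₅ 3 : Submodule ℂ (ExteriorAlgebra ℂ V)) := by
  have : FiniteDimensional ℂ A := finite_of_finrank_pos (by omega)
  have hA : EPW.IsLagrangian vol A := ⟨hA3, hA10, hAlag⟩
  obtain ⟨d, rfl, hdx⟩ := EPW.exists_dual_ker_eq (by rw [hV₅, hdim]) hx
  have hspec (q) (hq : EPW.IsInducedForm vol x (LinearMap.ker d) A q) :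
      (∀ a b, q a b = q b a) ∧ A = EPW.AWq V vol x _ _ q :=
    ⟨hq.symm hdim hdx hAlag, (hq.le_AWq hdx hA3).antisymm (hq.AWq_le hdim hvol.injective hdx hA)⟩
  obtain ⟨q, hq⟩ := EPW.exists_isInducedForm hdim hdx hA3 hAlag
  refine ⟨fun w hw w' hw' η hη η' hη' h h' ↦
      EPW.volC_ι_mul_mul_congr_of_isotropic hdim hdx hAlag hw.1 hw' hη hη' h h',
    ⟨q, hspec q hq, fun q' hq' ↦ (EPW.isInducedForm_of_le_AWq hdx hq'.2.le).eq hq⟩, hspec, ?_⟩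
  have hrank := EPW.finrank_Wof_add_finrank_inf_extPow hdx hA3
  omega
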